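/- arXiv:1808.00417 — 6 statements merged into one kernel-verified Lean document; each statement's English description precedes it below -/
import Mathlib

section
/- Let P be a finite ground program, B ⊆ P a background knowledge, and T a test case (a set of atoms occurring in P). Then the program Γ_P = D*(P) ∪ P_T ∪ P_A is coherent if and only if the program P ∪ P_T is coherent. -/
/-- A ground disjunctive ASP rule: head atoms, positive body atoms, negative body atoms. -/
structure Rule (α : Type*) where
  head : Finset α
  pos : Finset α
  neg : Finset α

/-- An interpretation `I` satisfies a rule `r`. -/
def satRule {α : Type*} (I : Set α) (r : Rule α) : Prop :=
  ((∀ b ∈ r.pos, b ∈ I) ∧ (∀ b ∈ r.neg, b ∉ I)) → ∃ a ∈ r.head, a ∈ I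

/-- An interpretation `I` satisfies a program. -/
def satProg {α : Type*} (I : Set α) (Prg : Set (Rule α)) : Prop :=
  ∀ r ∈ Prg, satRule I r

/-- The reduct of a program with respect to an interpretation `I`. -/
def reduct {α : Type*} (Prg : Set (Rule α)) (I : Set α) : Set (Rule α) :=
  {r' | ∃ r ∈ Prg, (∀ b ∈ r.neg, b ∉ I) ∧ r' = ⟨r.head, r.pos, ∅⟩}

/-- `I` is an answer set of `Prg`. -/
def isAnswerSet {α : Type*} (Prg : Set (Rule α)) (I : Set α) : Prop :=
  satProg I Prg ∧ ∀ J ⊂ I, ¬ satProg J (reduct Prg I)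

/-- The set of answer sets of a program. -/
def AS {α : Type*} (Prg : Set (Rule α)) : Set (Set α) := {I | isAnswerSet Prg I}

/-- A program is coherent if it has at least one answer set. -/
def coherent {α : Type*} (Prg : Set (Rule α)) : Prop := (AS Prg).Nonempty

/-- The fact `a ←`. -/
def fact {α : Type*} (a : α) : Rule α := ⟨{a}, ∅, ∅⟩

/-- Atom `a` occurs in rule `r`. -/
def occursIn {α : Type*} (a : α) (r : Rule α) : Prop :=
  a ∈ r.head ∨ a ∈ r.pos ∨ a ∈ r.neg

/-- The atoms occurring in a program. -/
def progAtoms {α : Type*} (Prg : Set (Rule α)) : Set α := {a | ∃ r ∈ Prg, occursIn a r}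

/-- The constraint `← not a`. -/
def constraintNot {α : Type*} (a : α) : Rule α := ⟨∅, ∅, {a}⟩

/-- `P_T`: the constraints `← not a` for `a ∈ T`. -/
def PT {α : Type*} (T : Set α) : Set (Rule α) := constraintNot '' T

/-- `P_A`: the facts `a ←` for `a ∈ A`. -/
def PA {α : Type*} (A : Set α) : Set (Rule α) := fact '' A

/-- The extended debugging program `D*(P)` over program `P` and background knowledge `B`,
with marker atoms `d r`, supporting atoms `s a`, and fresh atoms `f x` for `x ∈ A`. -/
def Dstar {α : Type*} [DecidableEq α] (P B : Set (Rule α))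
    (d : Rule α → α) (s : α → α) (f : α → α) (A : Set α) : Set (Rule α) :=
  ((fun r => (⟨r.head, insert (d r) r.pos, r.neg⟩ : Rule α)) '' (P \ B))
  ∪ ((fun a => (⟨{a}, ∅, {s a}⟩ : Rule α)) '' progAtoms P)
  ∪ B
  ∪ ((fun x => (⟨{x, f x}, ∅, ∅⟩ : Rule α)) '' A)

/-- `J` satisfies the reduct of `Prg` with respect to `I`, unfolded. -/
def redSat {α : Type*} (Prg : Set (Rule α)) (I J : Set α) : Prop :=
  ∀ r ∈ Prg, (∀ b ∈ r.neg, b ∉ I) → (∀ b ∈ r.pos, b ∈ J) → ∃ a ∈ r.head, a ∈ J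

theorem redSat_iff {α : Type*} (Prg : Set (Rule α)) (I J : Set α) :
    satProg J (reduct Prg I) ↔ redSat Prg I J := by
  constructor
  · intro h r hr hn hp
    exact h ⟨r.head, r.pos, ∅⟩ ⟨r, hr, hn, rfl⟩ ⟨hp, by simp⟩
  · rintro h _ ⟨r, hr, hn, rfl⟩ ⟨hp, -⟩
    exact h r hr hn hp

theorem satProg_iff {α : Type*} (Prg : Set (Rule α)) (I : Set α) :
    satProg I Prg ↔ redSat Prg I I :=
  ⟨fun h r hr hn hp => h r hr ⟨hp, hn⟩, fun h r hr hb => h r hr hb.2 hb.1⟩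

theorem isAnswerSet_iff {α : Type*} (Prg : Set (Rule α)) (I : Set α) :
    isAnswerSet Prg I ↔ redSat Prg I I ∧ ∀ J ⊂ I, ¬ redSat Prg I J := by
  simp only [isAnswerSet, redSat_iff]
  rw [satProg_iff]

theorem redSat_core {α : Type*} [DecidableEq α]
    (P B : Set (Rule α)) (hBP : B ⊆ P)
    (T : Set α) (hT : T ⊆ progAtoms P)
    (d : Rule α → α) (s : α → α) (f : α → α)
    (A : Set α) (hA : A = d '' (P \ B) ∪ s '' progAtoms P)
    (hAfresh : Disjoint A (progAtoms P)) (I J : Set α) (hI : A ⊆ I) (hJ : A ⊆ J) :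
    redSat (Dstar P B d s f A ∪ PT T ∪ PA A) I J ↔ redSat (P ∪ PT T) (I \ A) (J \ A) := by
  have hd : ∀ r ∈ P, r ∉ B → d r ∈ A := fun r h1 h2 => hA ▸ Or.inl ⟨r, ⟨h1, h2⟩, rfl⟩
  have hs : ∀ a ∈ progAtoms P, s a ∈ A := fun a h => hA ▸ Or.inr ⟨a, h, rfl⟩
  have hfr : ∀ a ∈ progAtoms P, a ∉ A := fun a h h' => Set.disjoint_left.1 hAfresh h' h
  have hh : ∀ r ∈ P, ∀ a ∈ r.head, a ∉ A := fun r hr a ha => hfr a ⟨r, hr, Or.inl ha⟩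
  have hp : ∀ r ∈ P, ∀ a ∈ r.pos, a ∉ A := fun r hr a ha => hfr a ⟨r, hr, Or.inr (Or.inl ha)⟩
  have hn : ∀ r ∈ P, ∀ a ∈ r.neg, a ∉ A := fun r hr a ha => hfr a ⟨r, hr, Or.inr (Or.inr ha)⟩
  constructor
  · rintro h r (hr | ⟨t, ht, rfl⟩) hneg hpos
    · have hneg' : ∀ b ∈ r.neg, b ∉ I := fun b hb hbI => hneg b hb ⟨hbI, hn r hr b hb⟩
      have hpos' : ∀ b ∈ r.pos, b ∈ J := fun b hb => (hpos b hb).1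
      by_cases hrB : r ∈ B
      · obtain ⟨a, ha, haJ⟩ := h r (Or.inl (Or.inl (Or.inl (Or.inr hrB)))) hneg' hpos'
        exact ⟨a, ha, haJ, hh r hr a ha⟩
      · obtain ⟨a, ha, haJ⟩ := h ⟨r.head, insert (d r) r.pos, r.neg⟩
          (Or.inl (Or.inl (Or.inl (Or.inl (Or.inl ⟨r, ⟨hr, hrB⟩, rfl⟩))))) hneg' (by
            intro b hb
            rcases Finset.mem_insert.1 hb with rfl | hb
            · exact hJ (hd r hr hrB)
            · exact hpos' b hb)
        exact ⟨a, ha, haJ, hh r hr a ha⟩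
    · obtain ⟨a, ha, -⟩ := h (constraintNot t) (Or.inl (Or.inr ⟨t, ht, rfl⟩)) (by
          intro b hb hbI
          have hbt : b = t := by simpa [constraintNot] using hb
          subst hbt
          exact hneg b hb ⟨hbI, hfr b (hT ht)⟩) (by simp [constraintNot])
      simp [constraintNot] at ha
  · intro h
    have key : ∀ r ∈ P, (∀ b ∈ r.neg, b ∉ I) → (∀ b ∈ r.pos, b ∈ J) → ∃ a ∈ r.head, a ∈ J := by
      intro r hr hneg hpos
      obtain ⟨a, ha, haJ⟩ := h r (Or.inl hr) (fun b hb hbI => hneg b hb hbI.1)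
        (fun b hb => ⟨hpos b hb, hp r hr b hb⟩)
      exact ⟨a, ha, haJ.1⟩
    rintro r (((((⟨r, hr, rfl⟩ | ⟨a, ha, rfl⟩) | hr) | ⟨x, hx, rfl⟩) | ⟨t, ht, rfl⟩) | ⟨x, hx, rfl⟩)
      hneg hpos
    · exact key r hr.1 hneg (fun b hb => hpos b (Finset.mem_insert_of_mem hb))
    · exact absurd (hI (hs a ha)) (hneg (s a) (by simp))
    · exact key r (hBP hr) hneg hpos
    · exact ⟨x, by simp, hJ hx⟩
    · obtain ⟨a, ha, -⟩ := h (constraintNot t) (Or.inr ⟨t, ht, rfl⟩)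
        (fun b hb hbI => hneg b hb hbI.1) (by simp [constraintNot])
      simp [constraintNot] at ha
    · exact ⟨x, by simp [fact], hJ hx⟩

theorem redSat_PA {α : Type*} (Prg : Set (Rule α)) (A I J : Set α)
    (h : redSat (Prg ∪ PA A) I J) : A ⊆ J := by
  intro x hx
  obtain ⟨a, ha, haJ⟩ := h (fact x) (Or.inr ⟨x, hx, rfl⟩) (by simp [fact]) (by simp [fact])
  have hax : a = x := by simpa [fact] using ha
  exact hax ▸ haJ

/-- Answer sets of `P ∪ PT T` contain only atoms of `P`. -/
theorem answer_subset {α : Type*} (P : Set (Rule α)) (T M : Set α)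
    (h1 : redSat (P ∪ PT T) M M) (h2 : ∀ J ⊂ M, ¬ redSat (P ∪ PT T) M J) :
    M ⊆ progAtoms P := by
  by_contra hM
  refine h2 (M ∩ progAtoms P) ⟨Set.inter_subset_left, fun h => hM (fun x hx => (h hx).2)⟩ ?_
  intro r hr hneg hpos
  obtain ⟨a, ha, haM⟩ := h1 r hr hneg (fun b hb => (hpos b hb).1)
  rcases hr with hr | ⟨t, ht, rfl⟩
  · exact ⟨a, ha, haM, r, hr, Or.inl ha⟩
  · simp [constraintNot] at ha

theorem stmt_0 {α : Type*} [DecidableEq α]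
    (P B : Set (Rule α)) (hPfin : P.Finite) (hBP : B ⊆ P)
    (T : Set α) (hT : T ⊆ progAtoms P)
    (d : Rule α → α) (s : α → α) (f : α → α)
    (A : Set α) (hA : A = d '' (P \ B) ∪ s '' progAtoms P)
    (hdinj : Set.InjOn d (P \ B))
    (hsinj : Set.InjOn s (progAtoms P))
    (hfinj : Set.InjOn f A)
    (hds : Disjoint (d '' (P \ B)) (s '' progAtoms P))
    (hAf : Disjoint A (f '' A))
    (hAfresh : Disjoint A (progAtoms P))
    (hfAfresh : Disjoint (f '' A) (progAtoms P)) :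
    coherent (Dstar P B d s f A ∪ PT T ∪ PA A) ↔ coherent (P ∪ PT T) := by
  have core := redSat_core P B hBP T hT d s f A hA hAfresh
  constructor
  · rintro ⟨I, hI⟩
    obtain ⟨h1, h2⟩ := (isAnswerSet_iff _ _).1 hI
    have hAI := redSat_PA _ _ _ _ h1
    refine ⟨I \ A, (isAnswerSet_iff _ _).2 ⟨(core I I hAI hAI).1 h1, ?_⟩⟩
    intro J hJ hJs
    have hJA : (J ∪ A) \ A = J := by
      ext x
      have := @hJ.1 x
      simp only [Set.mem_sdiff, Set.mem_union] at this ⊢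
      tauto
    refine h2 (J ∪ A) ⟨Set.union_subset (fun x hx => (hJ.1 hx).1) hAI, fun h => hJ.2 ?_⟩ ?_
    · rintro x ⟨hx, hxA⟩
      exact (h hx).resolve_right hxA
    · rw [core I (J ∪ A) hAI Set.subset_union_right, hJA]
      exact hJs
  · rintro ⟨M, hM⟩
    obtain ⟨h1, h2⟩ := (isAnswerSet_iff _ _).1 hM
    have hMs := answer_subset P T M h1 h2
    have hMA : (M ∪ A) \ A = M := by
      ext x
      have h3 : x ∈ M → x ∉ A := fun hx hxA => Set.disjoint_left.1 hAfresh hxA (hMs hx)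
      simp only [Set.mem_sdiff, Set.mem_union]
      tauto
    have hAI : A ⊆ M ∪ A := Set.subset_union_right
    refine ⟨M ∪ A, (isAnswerSet_iff _ _).2 ⟨?_, ?_⟩⟩
    · rw [core _ _ hAI hAI, hMA]
      exact h1
    · intro J hJ hJs
      have hAJ := redSat_PA _ _ _ _ hJs
      rw [core _ _ hAI hAJ, hMA] at hJs
      refine h2 (J \ A) ⟨fun x hx => (hJ.1 hx.1).resolve_right hx.2, fun h => hJ.2 ?_⟩ hJs
      exact Set.union_subset (fun x hx => (h hx).1) hAJ
end

section
/- Let P be a finite ground program, T a test case, B ⊆ P a background knowledge, and D*(P) the extended debugging program over P and B. Let Γ_P = D*(P) ∪ P_T ∪ P_A be incoherent and let R ⊆ P_A be a reason of incoherence, i.e., (Γ_P \ P_A) ∪ R is incoherent. Then any set of rules R₁ with R ⊊ R₁ ⊆ P_A is also a reason of incoherence, i.e., (Γ_P \ P_A) ∪ R₁ is incoherent. -/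
theorem stmt_1 {α : Type*} [DecidableEq α]
    (P B : Set (Rule α)) (hPfin : P.Finite) (hBP : B ⊆ P)
    (T : Set α) (hT : T ⊆ progAtoms P)
    (d : Rule α → α) (s : α → α) (f : α → α)
    (A : Set α) (hA : A = d '' (P \ B) ∪ s '' progAtoms P)
    (hdinj : Set.InjOn d (P \ B))
    (hsinj : Set.InjOn s (progAtoms P))
    (hfinj : Set.InjOn f A)
    (hds : Disjoint (d '' (P \ B)) (s '' progAtoms P))
    (hAf : Disjoint A (f '' A))
    (hAfresh : Disjoint A (progAtoms P))
    (hfAfresh : Disjoint (f '' A) (progAtoms P))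
    (hGammaInc : ¬ coherent (Dstar P B d s f A ∪ PT T ∪ PA A))
    (R : Set (Rule α)) (hR : R ⊆ PA A)
    (hReason : ¬ coherent (((Dstar P B d s f A ∪ PT T ∪ PA A) \ PA A) ∪ R))
    (R₁ : Set (Rule α)) (hR₁sub : R ⊂ R₁) (hR₁PA : R₁ ⊆ PA A) :
    ¬ coherent (((Dstar P B d s f A ∪ PT T ∪ PA A) \ PA A) ∪ R₁) := by
  rintro ⟨I, hI, hmin⟩
  apply hReason
  have hchoice : ∀ x ∈ A, (⟨{x, f x}, ∅, ∅⟩ : Rule α) ∈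
      (Dstar P B d s f A ∪ PT T ∪ PA A) \ PA A := by
    intro x hx
    refine ⟨Or.inl (Or.inl (Or.inr ⟨x, hx, rfl⟩)), ?_⟩
    rintro ⟨y, hy, hxy⟩
    have h1 : ({y} : Finset α) = {x, f x} := congrArg Rule.head hxy
    have h2 : f x ∈ ({y} : Finset α) := by rw [h1]; simp
    rw [Finset.mem_singleton] at h2
    exact Set.disjoint_left.mp hAf hy ⟨x, hx, h2⟩
  -- `f x` occurs in a head only in the choice rule, so `x` is in that head too
  have hhead : ∀ x ∈ A, ∀ r ∈ ((Dstar P B d s f A ∪ PT T ∪ PA A) \ PA A) ∪ R₁,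
      f x ∈ r.head → x ∈ r.head := by
    intro x hx r hr hfx
    have hnp : f x ∉ progAtoms P := fun h => Set.disjoint_left.mp hfAfresh ⟨x, hx, rfl⟩ h
    have hnA : f x ∉ A := fun h => Set.disjoint_left.mp hAf h ⟨x, hx, rfl⟩
    have hr' : r ∈ Dstar P B d s f A ∪ PT T ∪ PA A := by
      rcases hr with hr | hr
      · exact hr.1
      · exact Or.inr (hR₁PA hr)
    rcases hr' with ((((⟨q, hq, rfl⟩ | ⟨a, ha, rfl⟩) | hB) | ⟨y, hy, rfl⟩) | ⟨a, ha, rfl⟩) | ⟨y, hy, rfl⟩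
    · exact absurd ⟨q, hq.1, Or.inl hfx⟩ hnp
    · have h : f x = a := by simpa using hfx
      exact absurd (h ▸ ha) hnp
    · exact absurd ⟨r, hBP hB, Or.inl hfx⟩ hnp
    · have h : f x = y ∨ f x = f y := by simpa using hfx
      rcases h with h | h
      · exact absurd (h ▸ hy) hnA
      · have := hfinj hx hy h
        subst this
        simp
    · simp [constraintNot] at hfx
    · have h : f x = y := by simpa [fact] using hfx
      exact absurd (h ▸ hy) hnA
  have hnotboth : ∀ x ∈ A, x ∈ I → f x ∉ I := by
    intro x hx hxI hfI
    have hne : x ≠ f x := fun h => Set.disjoint_left.mp hAf hx ⟨x, hx, h.symm⟩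
    apply hmin (I \ {f x})
    · refine ⟨Set.diff_subset, fun h => (h hfI).2 rfl⟩
    · rintro _ ⟨r, hr, hneg, rfl⟩ ⟨hpos, -⟩
      obtain ⟨a, ha, haI⟩ := hI r hr ⟨fun b hb => (hpos b hb).1, hneg⟩
      by_cases h : a = f x
      · exact ⟨x, hhead x hx r hr (h ▸ ha), hxI, hne⟩
      · exact ⟨a, ha, haI, h⟩
  refine ⟨I, ?_, ?_⟩
  · intro r hr
    exact hI r (hr.imp id (fun h => hR₁sub.1 h))
  · intro J hJ hsat
    apply hmin J hJ
    rintro _ ⟨r, hr, hneg, rfl⟩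
    rcases hr with hr | hr
    · exact hsat _ ⟨r, Or.inl hr, hneg, rfl⟩
    · have hIr := hI r (Or.inr hr)
      obtain ⟨x, hx, rfl⟩ := hR₁PA hr
      have hxI : x ∈ I := by simpa [satRule, fact] using hIr
      have hJc := hsat _ ⟨_, Or.inl (hchoice x hx), by simp, rfl⟩
      have hJx : x ∈ J ∨ f x ∈ J := by simpa [satRule] using hJc
      rcases hJx with h | h
      · intro _
        exact ⟨x, by simp [fact], h⟩
      · exact absurd (hJ.1 h) (hnotboth x hx hxI)
end

section
/- Let Q be a ground program and A a set of atoms such that for every a ∈ A: (1) Q contains the choice rule a ∨ a_F ← (head {a, a_F}, empty body) for some atom a_F that occurs in no other rule of Q, and (2) this choice rule is the only rule of Q whose head contains a. Let R ⊆ {a ← : a ∈ A} and R₁ be sets of facts with R ⊆ R₁ ⊆ {a ← : a ∈ A}. If Q ∪ R is incoherent, then Q ∪ R₁ is incoherent. -/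
/-- Equality of two choice rules sharing an atom. -/
theorem pair_rule_eq {α : Type*} [DecidableEq α] {a b c : α} (hab : a ≠ b)
    (h : (⟨{a, b}, ∅, ∅⟩ : Rule α) = ⟨{a, c}, ∅, ∅⟩) : c = b := by
  have h1 : ({a, b} : Finset α) = {a, c} := congrArg Rule.head h
  have h2 : b ∈ ({a, c} : Finset α) := by rw [← h1]; simp
  simp only [Finset.mem_insert, Finset.mem_singleton] at h2
  rcases h2 with h2 | h2
  · exact absurd h2.symm hab
  · exact h2.symm

theorem stmt_2 {α : Type*} [DecidableEq α]
    (Q : Set (Rule α)) (A : Set α)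
    (hchoice : ∀ a ∈ A, ∃ aF : α,
      (⟨{a, aF}, ∅, ∅⟩ : Rule α) ∈ Q ∧
      (∀ r ∈ Q, r ≠ (⟨{a, aF}, ∅, ∅⟩ : Rule α) → ¬ occursIn aF r) ∧
      (∀ r ∈ Q, a ∈ r.head → r = (⟨{a, aF}, ∅, ∅⟩ : Rule α)))
    (R R₁ : Set (Rule α)) (hRR₁ : R ⊆ R₁) (hR₁ : R₁ ⊆ fact '' A)
    (hinc : ¬ coherent (Q ∪ R)) :
    ¬ coherent (Q ∪ R₁) := by
  rintro ⟨I, hIsat, hImin⟩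
  apply hinc
  have hA : ∀ a, fact a ∈ R₁ → a ∈ A := by
    intro a ha
    obtain ⟨a', ha', he⟩ := hR₁ ha
    have h1 : ({a'} : Finset α) = {a} := congrArg Rule.head he
    rw [Finset.singleton_inj] at h1
    exact h1 ▸ ha'
  have hI : ∀ a, fact a ∈ R₁ → a ∈ I := by
    intro a ha
    have := hIsat (fact a) (Or.inr ha)
    simpa [satRule, fact] using this
  -- pairs of atoms of `A` are isolated
  have hiso : ∀ a b, a ∈ A → a ≠ b → (⟨{a, b}, ∅, ∅⟩ : Rule α) ∈ Q →
      ∀ r ∈ Q, occursIn b r → r = ⟨{a, b}, ∅, ∅⟩ := by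
    intro a b ha hab hr r hrQ hocc
    obtain ⟨c, h1, h2, h3⟩ := hchoice a ha
    have hc := pair_rule_eq hab (h3 _ hr (by simp))
    subst hc
    by_contra hne
    exact h2 r hrQ hne hocc
  let D : Set α := {b | fact b ∈ R₁ ∧ fact b ∉ R ∧ ∃ a, a ≠ b ∧ fact a ∈ R₁ ∧
    (⟨{a, b}, ∅, ∅⟩ : Rule α) ∈ Q ∧ (fact a ∈ R ∨ WellOrderingRel a b)}
  -- the partner of an atom of `D`
  have hD : ∀ b ∈ D, ∃ a, a ∈ I ∧ a ∉ D ∧ ∀ r ∈ Q, occursIn b r → r = ⟨{a, b}, ∅, ∅⟩ := by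
    rintro b ⟨hb1, hb2, a, hab, ha1, hr, hor⟩
    refine ⟨a, hI a ha1, ?_, hiso a b (hA a ha1) hab hr⟩
    rintro ⟨_, ha2, c, hca, hc1, hrc, horc⟩
    have e1 := hiso c a (hA c hc1) hca hrc _ hr (by simp [occursIn])
    have hcb : c = b := by
      have h1 : (⟨{a, b}, ∅, ∅⟩ : Rule α) = ⟨{a, c}, ∅, ∅⟩ := by
        rw [e1, Finset.pair_comm]
      exact pair_rule_eq hab h1
    subst hcb
    rcases hor with h | h
    · exact ha2 h
    · rcases horc with h' | h'
      · exact hb2 h'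
      · exact asymm h h'
  have hDI : D ⊆ I := fun b hb => hI b hb.1
  refine ⟨I \ D, ?_, ?_⟩
  · rintro r (hr | hr)
    · by_cases ht : ∃ b ∈ D, occursIn b r
      · obtain ⟨b, hb, hocc⟩ := ht
        obtain ⟨a, haI, haD, h⟩ := hD b hb
        rw [h r hr hocc]
        intro _
        exact ⟨a, by simp, haI, haD⟩
      · push Not at ht
        rintro ⟨hp, hn⟩
        obtain ⟨x, hx, hxI⟩ := hIsat r (Or.inl hr) ⟨fun b hb => (hp b hb).1, fun b hb hbI =>
          hn b hb ⟨hbI, fun hbD => ht b hbD (Or.inr (Or.inr hb))⟩⟩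
        exact ⟨x, hx, hxI, fun hxD => ht x hxD (Or.inl hx)⟩
    · obtain ⟨a, ha, rfl⟩ := hR₁ (hRR₁ hr)
      intro _
      exact ⟨a, by simp [fact], hI a (hRR₁ hr), fun h => h.2.1 hr⟩
  · intro J hJ hJsat
    have hJI : J ⊆ I \ D := hJ.1
    apply hImin (J ∪ D)
    · refine ⟨fun x hx => hx.elim (fun h => (hJI h).1) (fun h => hDI h), fun hsub => hJ.2 ?_⟩
      intro x hx
      exact (hsub hx.1).resolve_right hx.2
    · rintro _ ⟨r, hr | hr, hneg, rfl⟩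
      · by_cases ht : ∃ b ∈ D, occursIn b r
        · obtain ⟨b, hb, hocc⟩ := ht
          obtain ⟨a, haI, haD, h⟩ := hD b hb
          rw [h r hr hocc]
          intro _
          exact ⟨b, by simp, Or.inr hb⟩
        · push Not at ht
          rintro ⟨hp, -⟩
          obtain ⟨x, hx, hxJ⟩ := hJsat ⟨r.head, r.pos, ∅⟩
            ⟨r, Or.inl hr, fun b hb h => hneg b hb h.1, rfl⟩
            ⟨fun b hb => (hp b hb).resolve_right fun hbD => ht b hbD (Or.inr (Or.inl hb)),
              by simp⟩
          exact ⟨x, hx, Or.inl hxJ⟩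
      · obtain ⟨a, ha, rfl⟩ := hR₁ hr
        intro _
        refine ⟨a, by simp [fact], ?_⟩
        by_contra hcon
        have haJ : a ∉ J := fun h => hcon (Or.inl h)
        have haD : a ∉ D := fun h => hcon (Or.inr h)
        have haR : fact a ∉ R := by
          intro h
          have := hJsat ⟨{a}, ∅, ∅⟩ ⟨fact a, Or.inr h, by simp [fact], rfl⟩
          apply haJ
          simpa [satRule] using this
        obtain ⟨c, hcQ, hc2, hc3⟩ := hchoice a ha
        have hcJ : c ∈ J := by
          have := hJsat ⟨{a, c}, ∅, ∅⟩ ⟨⟨{a, c}, ∅, ∅⟩, Or.inl hcQ, by simp, rfl⟩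
          have h2 : a ∈ J ∨ c ∈ J := by simpa [satRule] using this
          exact h2.resolve_left haJ
        have hac : a ≠ c := fun h => haJ (h ▸ hcJ)
        by_cases hcR : fact c ∈ R₁
        · have hcQ' : (⟨{c, a}, ∅, ∅⟩ : Rule α) ∈ Q := by rw [Finset.pair_comm]; exact hcQ
          have hcD := (hJI hcJ).2
          by_cases hcR' : fact c ∈ R
          · exact haD ⟨hr, haR, c, hac.symm, hcR, hcQ', Or.inl hcR'⟩
          · rcases trichotomous_of WellOrderingRel a c with h | h | h
            · exact hcD ⟨hcR, hcR', a, hac, hr, hcQ, Or.inr h⟩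
            · exact hac h
            · exact haD ⟨hr, haR, c, hac.symm, hcR, hcQ', Or.inr h⟩
        · apply hImin (I \ {c})
          · refine ⟨fun x hx => hx.1, fun hsub => ?_⟩
            exact (hsub (hJI hcJ).1).2 rfl
          · rintro _ ⟨r, hr' | hr', hneg, rfl⟩
            · by_cases hrc : r = ⟨{a, c}, ∅, ∅⟩
              · subst hrc
                intro _
                exact ⟨a, by simp, hI a hr, hac⟩
              · have hno := hc2 r hr' hrc
                rintro ⟨hp, -⟩
                obtain ⟨x, hx, hxI⟩ := hIsat r (Or.inl hr') ⟨fun b hb => (hp b hb).1, hneg⟩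
                refine ⟨x, hx, hxI, ?_⟩
                rintro rfl
                exact hno (Or.inl hx)
            · obtain ⟨d, hd, rfl⟩ := hR₁ hr'
              intro _
              refine ⟨d, by simp [fact], hI d hr', ?_⟩
              rintro rfl
              exact hcR hr'
end

section
/- Let Π be a ground program and I an answer set of Π. Then every atom a ∈ I is supported with respect to I, i.e., there exists a rule r ∈ Π such that a ∈ H(r), B⁺(r) ⊆ I, B⁻(r) ∩ I = ∅, and I ∩ (H(r) \ {a}) = ∅. -/
theorem stmt_7 {α : Type*}
    (Prg : Set (Rule α)) (I : Set α) (hI : isAnswerSet Prg I)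
    (a : α) (ha : a ∈ I) :
    ∃ r ∈ Prg, a ∈ r.head ∧ (∀ b ∈ r.pos, b ∈ I) ∧ (∀ b ∈ r.neg, b ∉ I) ∧
      ∀ b ∈ r.head, b ≠ a → b ∉ I := by
  by_contra hno
  refine hI.2 (I \ {a}) ⟨Set.diff_subset, fun h => (h ha).2 rfl⟩ ?_
  rintro _ ⟨r, hr, hneg, rfl⟩ ⟨hpos, -⟩
  have hpos' : ∀ b ∈ r.pos, b ∈ I := fun b hb => (hpos b hb).1
  obtain ⟨c, hc, hcI⟩ := hI.1 r hr ⟨hpos', hneg⟩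
  by_cases hca : c = a
  · subst hca
    by_contra hnone
    exact hno ⟨r, hr, hc, hpos', hneg, fun b hb hbc hbI => hnone ⟨b, hb, hbI, hbc⟩⟩
  · exact ⟨c, hc, hcI, hca⟩
end

section
/- Let Q be a ground program containing the fact d← (rule with head {d} and empty body), and let H, B⁺, B⁻ be finite sets of atoms. Then the program Q ∪ {H ← B⁺ ∪ {d}, B⁻} (the rule with head H, positive body B⁺ ∪ {d}, and negative body B⁻) has exactly the same answer sets as the program Q ∪ {H ← B⁺, B⁻}. That is, adding a positive body atom d to a rule, where d is a fact of the program, does not change the answer sets. -/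
theorem satProg_union_singleton {α : Type*} (I : Set α) (Q : Set (Rule α)) (r : Rule α) :
    satProg I (Q ∪ {r}) ↔ satProg I Q ∧ satRule I r := by
  simp only [satProg, Set.mem_union, Set.mem_singleton_iff]
  constructor
  · intro h
    exact ⟨fun s hs => h s (Or.inl hs), h r (Or.inr rfl)⟩
  · rintro ⟨h1, h2⟩ s (hs | rfl)
    · exact h1 s hs
    · exact h2

theorem satProg_reduct_union {α : Type*} (I J : Set α) (Q : Set (Rule α)) (r : Rule α) :
    satProg J (reduct (Q ∪ {r}) I) ↔ satProg J (reduct Q I) ∧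
      ((∀ b ∈ r.neg, b ∉ I) → satRule J ⟨r.head, r.pos, ∅⟩) := by
  constructor
  · intro h
    exact ⟨fun s ⟨t, ht, h1, h2⟩ => h s ⟨t, Or.inl ht, h1, h2⟩,
      fun hn => h _ ⟨r, Or.inr rfl, hn, rfl⟩⟩
  · rintro ⟨h1, h2⟩ s ⟨t, ht | ht, hn, rfl⟩
    · exact h1 _ ⟨t, ht, hn, rfl⟩
    · cases ht
      exact h2 hn

theorem satRule_fact {α : Type*} {I : Set α} {d : α} (h : satRule I (fact d)) : d ∈ I := by
  simpa [satRule, fact] using h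

theorem satRule_insert {α : Type*} [DecidableEq α] {I : Set α} {d : α} (hd : d ∈ I)
    (H Bp Bn : Finset α) : satRule I ⟨H, insert d Bp, Bn⟩ ↔ satRule I ⟨H, Bp, Bn⟩ := by
  simp [satRule, hd]

theorem stmt_10 {α : Type*} [DecidableEq α]
    (Q : Set (Rule α)) (d : α) (hd : fact d ∈ Q)
    (H Bp Bn : Finset α) :
    AS (Q ∪ {(⟨H, insert d Bp, Bn⟩ : Rule α)}) = AS (Q ∪ {(⟨H, Bp, Bn⟩ : Rule α)}) := by
  ext I
  simp only [AS, Set.mem_setOf_eq, isAnswerSet, satProg_union_singleton, satProg_reduct_union]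
  refine and_congr ?_ (forall_congr' fun J => imp_congr_right fun _ => not_congr ?_)
  · refine and_congr_right fun h => ?_
    exact satRule_insert (satRule_fact (h _ hd)) H Bp Bn
  · refine and_congr_right fun h => imp_congr_right fun _ => ?_
    have hJ : satRule J (fact d) := h _ ⟨fact d, hd, by simp [fact], rfl⟩
    exact satRule_insert (satRule_fact hJ) H Bp ∅
end

section
/- Let Q be a ground program, a an atom (which may occur in Q), and a_F an atom that does not occur in any rule of Q. Then an interpretation I is an answer set of Q ∪ {a ∨ a_F ←} (where a ∨ a_F ← is the rule with head {a, a_F} and empty body) if and only if either (i) a ∈ I and I is an answer set of Q ∪ {a ←}, or (ii) a ∉ I, a_F ∈ I, and I \ {a_F} is an answer set of Q. That is, the choice rule {a}, read as the shortcut a ∨ a_F ← with a_F a fresh atom, lets a be freely true or false relative to Q. -/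
theorem sat_reduct_iff {α : Type*} (P : Set (Rule α)) (I J : Set α) :
    satProg J (reduct P I) ↔ ∀ r ∈ P, (∀ b ∈ r.neg, b ∉ I) → (∀ b ∈ r.pos, b ∈ J) →
      ∃ c ∈ r.head, c ∈ J := by
  constructor
  · intro h r hr hn hp
    exact h ⟨r.head, r.pos, ∅⟩ ⟨r, hr, hn, rfl⟩ ⟨hp, by simp⟩
  · rintro h _ ⟨r, hr, hn, rfl⟩ ⟨hp, _⟩
    exact h r hr hn hp

theorem sat_iff_reduct {α : Type*} (P : Set (Rule α)) (I : Set α) :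
    satProg I P ↔ satProg I (reduct P I) := by
  rw [sat_reduct_iff]
  exact ⟨fun h r hr hn hp => h r hr ⟨hp, hn⟩, fun h r hr hb => h r hr hb.2 hb.1⟩

theorem sat_reduct_mono {α : Type*} (Q : Set (Rule α)) (x : α)
    (hfresh : ∀ r ∈ Q, ¬ occursIn x r) (I I' J J' : Set α)
    (hI : ∀ b, b ≠ x → (b ∈ I ↔ b ∈ I')) (hJ : ∀ b, b ≠ x → (b ∈ J ↔ b ∈ J'))
    (h : satProg J (reduct Q I)) : satProg J' (reduct Q I') := by
  rw [sat_reduct_iff] at h ⊢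
  intro r hr hn hp
  have hf := hfresh r hr
  simp only [occursIn, not_or] at hf
  obtain ⟨h1, h2, h3⟩ := hf
  obtain ⟨c, hc, hcJ⟩ := h r hr
    (fun b hb hbI => hn b hb ((hI b (fun e => h3 (e ▸ hb))).1 hbI))
    (fun b hb => (hJ b (fun e => h2 (e ▸ hb))).2 (hp b hb))
  exact ⟨c, hc, (hJ c (fun e => h1 (e ▸ hc))).1 hcJ⟩

theorem sat_reduct_choice {α : Type*} [DecidableEq α] (Q : Set (Rule α)) (a x : α) (I J : Set α) :
    satProg J (reduct (Q ∪ {(⟨{a, x}, ∅, ∅⟩ : Rule α)}) I) ↔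
      satProg J (reduct Q I) ∧ (a ∈ J ∨ x ∈ J) := by
  simp only [sat_reduct_iff, Set.mem_union, or_imp, forall_and, Set.mem_singleton_iff,
    forall_eq]
  simp

theorem sat_reduct_fact {α : Type*} (Q : Set (Rule α)) (a : α) (I J : Set α) :
    satProg J (reduct (Q ∪ {fact a}) I) ↔ satProg J (reduct Q I) ∧ a ∈ J := by
  simp only [sat_reduct_iff, Set.mem_union, or_imp, forall_and, Set.mem_singleton_iff,
    forall_eq]
  simp [fact]

theorem stmt_12 {α : Type*} [DecidableEq α]
    (Q : Set (Rule α)) (a aF : α)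
    (hfresh : ∀ r ∈ Q, ¬ occursIn aF r)
    (I : Set α) :
    isAnswerSet (Q ∪ {(⟨{a, aF}, ∅, ∅⟩ : Rule α)}) I ↔
      (a ∈ I ∧ isAnswerSet (Q ∪ {fact a}) I) ∨
      (a ∉ I ∧ aF ∈ I ∧ isAnswerSet Q (I \ {aF})) := by
  have key := sat_reduct_mono Q aF hfresh
  rw [isAnswerSet, isAnswerSet, isAnswerSet, sat_iff_reduct (Q ∪ {(⟨{a, aF}, ∅, ∅⟩ : Rule α)}) I,
    sat_iff_reduct (Q ∪ {fact a}) I, sat_iff_reduct Q (I \ {aF})]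
  simp only [sat_reduct_choice,
    sat_reduct_fact]
  by_cases ha : a ∈ I
  · simp only [ha, true_or, and_true, true_and, not_true_eq_false, false_and, or_false]
    refine and_congr_right fun hs => ⟨fun h J hJ hh => h J hJ ⟨hh.1, Or.inl hh.2⟩, ?_⟩
    rintro h J hJ ⟨h1, h2⟩
    by_cases haJ : a ∈ J
    · exact h J hJ ⟨h1, haJ⟩
    have hx : aF ∈ J := h2.resolve_left haJ
    have hne : a ≠ aF := fun e => haJ (e ▸ hx)
    refine h (I \ {aF}) ⟨Set.diff_subset, fun hh => (hh (hJ.1 hx)).2 rfl⟩ ⟨?_, ha, hne⟩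
    exact key I I I (I \ {aF}) (fun _ _ => Iff.rfl) (fun b hb => by simp [hb]) hs
  · simp only [ha, false_or, false_and, not_false_eq_true, true_and]
    constructor
    · rintro ⟨⟨hs, hx⟩, h⟩
      refine ⟨hx, key I _ I _ (fun b hb => by simp [hb]) (fun b hb => by simp [hb]) hs, ?_⟩
      intro J hJ hh
      refine h (insert aF J) ⟨?_, fun hI => hJ.2 ?_⟩ ⟨?_, Or.inr (Set.mem_insert _ _)⟩
      · exact Set.insert_subset hx (hJ.1.trans Set.diff_subset)
      · rintro b ⟨hb, hbx⟩
        exact (hI hb).resolve_left hbx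
      · exact key _ I J _ (fun b hb => by simp [hb]) (fun b hb => by simp [hb]) hh
    · rintro ⟨hx, hs, h⟩
      refine ⟨⟨key _ I _ I (fun b hb => by simp [hb]) (fun b hb => by simp [hb]) hs, hx⟩, ?_⟩
      rintro J hJ ⟨h1, h2⟩
      have hxJ : aF ∈ J := h2.resolve_left fun e => ha (hJ.1 e)
      refine h (J \ {aF}) ⟨Set.diff_subset_diff_left hJ.1, fun hI => hJ.2 ?_⟩
        (key I _ J _ (fun b hb => by simp [hb]) (fun b hb => by simp [hb]) h1)
      intro b hb
      by_cases e : b = aF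
      · exact e ▸ hxJ
      · exact (hI ⟨hb, e⟩).1
end
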